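/- Let u ≥ 4 and d ≥ 0 be integers, q = u−1 and p = u−2. Then Σ_{a+b=u, a≥2, b≥1} (b−1)·ζ(a,b,1_d) = (p−1)·ζ(u,1_d) − ζ(2,p,1_d) + p(d+1)·ζ(q,1_{d+1}) + Σ_{j=0}^{d−1} [ p·ζ(q,1_j,2,1_{d−1−j}) − ζ(p,1_j,3,1_{d−1−j}) + (d−j)·ζ(p,1_j,2,1_{d−j}) ]. -/

import Mathlib

/-- The multiple zeta value `ζ(s₁,…,s_d) = Σ_{k₁>⋯>k_d≥1} 1/(k₁^{s₁}⋯k_d^{s_d})`. -/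
noncomputable def mzv {d : ℕ} (s : Fin d → ℕ) : ℝ :=
  ∑' k : {k : Fin d → ℕ // StrictAnti k ∧ ∀ i, 0 < k i},
    ∏ i, (1 : ℝ) / (k.1 i : ℝ) ^ s i

/-!
Let `m > n ≥ 1` and put `x = 1/m`, `y = 1/n`, `z = 1/(m-n)`, so that `z (y - x) = x y`. This
relation gives, with `p = u - 2`,
`∑_{a+b=u} (b-1) x^a y^b = p y^(p+1) (z - x) - (y^p - x^p) z²`.
Multiply by the multiple harmonic sum `H_{n-1}(1_d)` and sum over `m > n`. The left side becomes
the weighted sum of zeta values. On the right, write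
`x^p z² - y^p z² = x^p z² - y^p (z² - x²) - x² y^p`.
* In the terms with `z - x` and `z² - x²`, the sum over `m` telescopes to `∑_{k≤n} k^(-s)` for
  `s = 1, 2`, whose product with `H_{n-1}(1_d)` is given by the stuffle product.
* In the term `x^p z²`, the sum over `n` is the convolution of `H_{n-1}(1_d)` with `r ↦ r^(-2)`,
  which repeated partial fraction expansion turns into multiple harmonic sums.

Summation variables are shifted to start at `0`, so `n + 1` plays the role of `n`. The word
`(1_j, a, 1_{d-1-j})` is encoded as `Pi.mulSingle j a : Fin d → ℕ`.
-/

section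

open Finset Filter Topology

local notation:67 a:68 "◂" s:67 => Fin.cons (α := fun _ ↦ ℕ) a s

/-- The index set `{(k₁,…,k_d) : n ≥ k₁ > ⋯ > k_d ≥ 1}` of the multiple harmonic sums of
depth `d`. -/
def strictAntiTuples (d n : ℕ) : Finset (Fin d → ℕ) :=
  {k ∈ Fintype.piFinset fun _ ↦ Icc 1 n | StrictAnti k}

/-- The multiple harmonic sum `H_n(s₁,…,s_d)`: the series of `ζ(s₁,…,s_d)` restricted to
`k₁ ≤ n`. -/
noncomputable def multipleHarmonicSum {d : ℕ} (s : Fin d → ℕ) (n : ℕ) : ℝ :=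
  ∑ k ∈ strictAntiTuples d n, ∏ i, (1 : ℝ) / (k i : ℝ) ^ s i

variable {d : ℕ}

lemma mem_strictAntiTuples {n : ℕ} {k : Fin d → ℕ} :
    k ∈ strictAntiTuples d n ↔ StrictAnti k ∧ ∀ i, 0 < k i ∧ k i ≤ n := by
  simp [strictAntiTuples, Nat.succ_le_iff, and_comm]

lemma strictAnti_cons_iff {n : ℕ} {k : Fin d → ℕ} :
    StrictAnti (n ◂ k) ↔ (∀ i, k i < n) ∧ StrictAnti k := by
  simp [StrictAnti, Fin.forall_fin_succ]

lemma cons_succ_mem_strictAntiTuples {m n : ℕ} {k : Fin d → ℕ} :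
    (m + 1) ◂ k ∈ strictAntiTuples (d + 1) n ↔ m < n ∧ k ∈ strictAntiTuples d m := by
  simp only [mem_strictAntiTuples, strictAnti_cons_iff, Fin.forall_fin_succ, Fin.cons_zero,
    Fin.cons_succ]
  grind

@[simp]
lemma multipleHarmonicSum_of_isEmpty (s : Fin 0 → ℕ) (n : ℕ) : multipleHarmonicSum s n = 1 := by
  simp [multipleHarmonicSum, strictAntiTuples, StrictAnti]

lemma multipleHarmonicSum_nonneg (s : Fin d → ℕ) (n : ℕ) : 0 ≤ multipleHarmonicSum s n :=
  sum_nonneg fun _ _ ↦ prod_nonneg fun _ _ ↦ by positivity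

lemma multipleHarmonicSum_cons (a : ℕ) (s : Fin d → ℕ) (n : ℕ) :
    multipleHarmonicSum (a ◂ s) n =
      ∑ m ∈ range n, ((m : ℝ) + 1)⁻¹ ^ a * multipleHarmonicSum s m := by
  simp only [multipleHarmonicSum, mul_sum]
  rw [sum_sigma']
  refine (sum_bij (fun x _ ↦ (x.1 + 1) ◂ x.2) ?_ ?_ ?_ ?_).symm
  · rintro ⟨m, k⟩ hx
    simpa [cons_succ_mem_strictAntiTuples] using hx
  · rintro ⟨m, k⟩ - ⟨m', k'⟩ - h
    obtain ⟨hm, rfl⟩ := Fin.cons_inj.1 h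
    obtain rfl := Nat.succ_injective hm
    rfl
  · intro k hk
    have hk₀ : 0 < k 0 := ((mem_strictAntiTuples.1 hk).2 0).1
    have hcons : (k 0 - 1 + 1) ◂ Fin.tail k = k := by
      rw [Nat.sub_add_cancel hk₀, Fin.cons_self_tail]
    rw [← hcons, cons_succ_mem_strictAntiTuples] at hk
    exact ⟨⟨k 0 - 1, Fin.tail k⟩, by simpa using hk, hcons⟩
  · rintro ⟨m, k⟩ -
    simp [Fin.prod_univ_succ, mul_comm]

@[simp]
lemma multipleHarmonicSum_zero (s : Fin (d + 1) → ℕ) : multipleHarmonicSum s 0 = 0 := by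
  simpa using multipleHarmonicSum_cons (s 0) (Fin.tail s) 0

lemma multipleHarmonicSum_cons_succ (a : ℕ) (s : Fin d → ℕ) (n : ℕ) :
    multipleHarmonicSum (a ◂ s) (n + 1) =
      multipleHarmonicSum (a ◂ s) n + ((n : ℝ) + 1)⁻¹ ^ a * multipleHarmonicSum s n := by
  simp only [multipleHarmonicSum_cons, sum_range_succ]

lemma multipleHarmonicSum_depth_one (s : Fin 1 → ℕ) (n : ℕ) :
    multipleHarmonicSum s n = ∑ m ∈ range n, ((m : ℝ) + 1)⁻¹ ^ s 0 := by
  simpa using multipleHarmonicSum_cons (s 0) (Fin.tail s) n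

theorem multipleHarmonicSum_stuffle (a : ℕ) (s : Fin d → ℕ) (n : ℕ) :
    multipleHarmonicSum (fun _ : Fin 1 ↦ a) n * multipleHarmonicSum s n =
      ∑ j : Fin (d + 1), multipleHarmonicSum (j.insertNth a s) n +
        ∑ j : Fin d, multipleHarmonicSum (Function.update s j (s j + a)) n := by
  have hword : (fun _ : Fin 1 ↦ a) = a ◂ Fin.elim0 := by
    ext i
    rw [Fin.fin_one_eq_zero i, Fin.cons_zero]
  rw [hword]
  induction s using Fin.consInduction generalizing n with
  | elim0 => simp
  | @cons d b s ih =>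
    rw [Fin.sum_univ_succ (n := d), Fin.sum_univ_succ (n := d + 1)]
    simp only [Fin.insertNth_zero', Fin.insertNth_succ_cons, Fin.update_cons_zero, Fin.cons_zero,
      Fin.cons_succ, ← Fin.cons_update]
    induction n with
    | zero => simp
    | succ n ihn =>
      simp only [multipleHarmonicSum_cons_succ, sum_add_distrib, ← mul_sum,
        multipleHarmonicSum_of_isEmpty] at ihn ih ⊢
      linear_combination ihn + ((n : ℝ) + 1)⁻¹ ^ b * ih n

lemma sqrt_add_le_sqrt_add_one {x : ℝ} (hx : 1 ≤ x) : √x + x⁻¹ * √x / 3 ≤ √(x + 1) := by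
  have hx₀ : 0 < x := by positivity
  refine Real.le_sqrt_of_sq_le ?_
  calc (√x + x⁻¹ * √x / 3) ^ 2 = √x ^ 2 * (1 + x⁻¹ / 3) ^ 2 := by ring
    _ = x + 2 / 3 + x⁻¹ / 9 := by rw [Real.sq_sqrt hx₀.le]; field_simp; ring
    _ ≤ x + 1 := by linarith [inv_le_one_of_one_le₀ hx]

lemma multipleHarmonicSum_le (s : Fin d → ℕ) (hs : ∀ i, 1 ≤ s i) (n : ℕ) :
    multipleHarmonicSum s n ≤ 3 ^ d * √(n + 1) := by
  induction s using Fin.consInduction generalizing n with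
  | elim0 => simp
  | @cons d a s ih =>
    induction n with
    | zero => simp
    | succ n ihn =>
      have ha : 1 ≤ a := hs 0
      have hinv : ((n : ℝ) + 1)⁻¹ ^ a ≤ ((n : ℝ) + 1)⁻¹ :=
        pow_le_of_le_one (by positivity) (inv_le_one_of_one_le₀ (by simp)) (by omega)
      calc multipleHarmonicSum (a ◂ s) (n + 1)
          ≤ 3 ^ (d + 1) * √(n + 1) + ((n : ℝ) + 1)⁻¹ * (3 ^ d * √(n + 1)) := by
            rw [multipleHarmonicSum_cons_succ]
            gcongr
            · exact multipleHarmonicSum_nonneg _ _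
            · exact ih (fun i ↦ hs i.succ) n
        _ = 3 ^ (d + 1) * (√(n + 1) + ((n : ℝ) + 1)⁻¹ * √(n + 1) / 3) := by ring
        _ ≤ 3 ^ (d + 1) * √((n + 1 : ℕ) + 1) := by
            push_cast
            gcongr
            exact sqrt_add_le_sqrt_add_one (by simp)

lemma summable_inv_pow_mul_multipleHarmonicSum {a : ℕ} (ha : 2 ≤ a) (s : Fin d → ℕ)
    (hs : ∀ i, 1 ≤ s i) :
    Summable fun n : ℕ ↦ ((n : ℝ) + 1)⁻¹ ^ a * multipleHarmonicSum s n := by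
  have hpow : Summable fun n : ℕ ↦ 3 ^ d * ((n + 1 : ℕ) : ℝ) ^ (-(3 / 2) : ℝ) :=
    (((summable_nat_add_iff 1).2 (Real.summable_nat_rpow.2 (by norm_num))).mul_left _)
  refine hpow.of_nonneg_of_le
    (fun n ↦ mul_nonneg (by positivity) (multipleHarmonicSum_nonneg s n)) fun n ↦ ?_
  have hn : (0 : ℝ) < (n : ℝ) + 1 := by positivity
  calc ((n : ℝ) + 1)⁻¹ ^ a * multipleHarmonicSum s n
      ≤ ((n : ℝ) + 1)⁻¹ ^ 2 * (3 ^ d * √(n + 1)) := by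
        gcongr ?_ * ?_
        · exact multipleHarmonicSum_nonneg s n
        · exact pow_le_pow_of_le_one (by positivity) (inv_le_one_of_one_le₀ (by simp)) ha
        · exact multipleHarmonicSum_le s hs n
    _ = 3 ^ d * ((n + 1 : ℕ) : ℝ) ^ (-(3 / 2) : ℝ) := by
        have hsq : ((n : ℝ) + 1)⁻¹ ^ 2 = ((n : ℝ) + 1) ^ (-2 : ℝ) := by
          rw [inv_pow, Real.rpow_neg hn.le, Real.rpow_two]
        rw [Real.sqrt_eq_rpow, mul_left_comm, hsq, ← Real.rpow_add hn]
        norm_num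

lemma hasSum_of_tendsto_sum {ι κ : Type*} {l : Filter κ} [l.NeBot] {f : ι → ℝ} (hf : 0 ≤ f)
    {S : κ → Finset ι} (hS : Tendsto S l atTop) {a : ℝ}
    (ha : Tendsto (fun n ↦ ∑ i ∈ S n, f i) l (𝓝 a)) : HasSum f a := by
  have hbound (t : Finset ι) : ∑ i ∈ t, f i ≤ a :=
    ge_of_tendsto ha ((hS.eventually_ge_atTop t).mono fun n ht ↦
      sum_le_sum_of_subset_of_nonneg ht fun i _ _ ↦ hf i)
  have hsum := (summable_of_sum_le hf hbound).hasSum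
  rwa [tendsto_nhds_unique ha (hsum.comp hS)]

lemma hasSum_of_tendsto_multipleHarmonicSum (s : Fin d → ℕ) {a : ℝ}
    (h : Tendsto (multipleHarmonicSum s) atTop (𝓝 a)) :
    HasSum (fun k : {k : Fin d → ℕ // StrictAnti k ∧ ∀ i, 0 < k i} ↦
      ∏ i, (1 : ℝ) / (k.1 i : ℝ) ^ s i) a := by
  let S (n : ℕ) : Finset {k : Fin d → ℕ // StrictAnti k ∧ ∀ i, 0 < k i} :=
    (strictAntiTuples d n).subtype _
  have hS : Tendsto S atTop atTop := by
    refine tendsto_atTop_finset_of_monotone (fun m n hmn k hk ↦ ?_) fun k ↦ ⟨∑ i, k.1 i, ?_⟩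
    · simp only [S, mem_subtype, mem_strictAntiTuples] at hk ⊢
      exact ⟨hk.1, fun i ↦ ⟨(hk.2 i).1, (hk.2 i).2.trans hmn⟩⟩
    · simp only [S, mem_subtype, mem_strictAntiTuples]
      exact ⟨k.2.1, fun i ↦ ⟨k.2.2 i, single_le_sum (fun _ _ ↦ Nat.zero_le _) (mem_univ i)⟩⟩
  refine hasSum_of_tendsto_sum (fun k ↦ prod_nonneg fun _ _ ↦ by positivity) hS ?_
  refine h.congr fun n ↦ (sum_subtype_of_mem (fun k : Fin d → ℕ ↦ ∏ i, (1 : ℝ) / (k i : ℝ) ^ s i)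
    fun k hk ↦ ?_).symm
  obtain ⟨hanti, hpos⟩ := mem_strictAntiTuples.1 hk
  exact ⟨hanti, fun i ↦ (hpos i).1⟩

lemma hasSum_mzv_cons {a : ℕ} (ha : 2 ≤ a) (s : Fin d → ℕ) (hs : ∀ i, 1 ≤ s i) :
    HasSum (fun n : ℕ ↦ ((n : ℝ) + 1)⁻¹ ^ a * multipleHarmonicSum s n)
      (mzv (a ◂ s)) := by
  have h := (summable_inv_pow_mul_multipleHarmonicSum ha s hs).hasSum
  rw [mzv, (hasSum_of_tendsto_multipleHarmonicSum _ ?_).tsum_eq]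
  · exact h
  · exact h.tendsto_sum_nat.congr fun n ↦ (multipleHarmonicSum_cons a s n).symm

/-- The convolution `∑_{n<m} f(n) / (m - n)^s` of `f` with the power `r ↦ r⁻ˢ` on `r ≥ 1`. -/
noncomputable def invPowConvolution (s : ℕ) (f : ℕ → ℝ) (m : ℕ) : ℝ :=
  ∑ n ∈ range m, ((m : ℝ) - n)⁻¹ ^ s * f n

lemma invPowConvolution_succ (s : ℕ) {f : ℕ → ℝ} (hf : f 0 = 0) (m : ℕ) :
    invPowConvolution s f (m + 1) = invPowConvolution s (fun n ↦ f (n + 1)) m := by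
  simp [invPowConvolution, sum_range_succ', hf]

lemma invPowConvolution_add (s : ℕ) (f g : ℕ → ℝ) (m : ℕ) :
    invPowConvolution s (fun n ↦ f n + g n) m =
      invPowConvolution s f m + invPowConvolution s g m := by
  simp only [invPowConvolution, mul_add, sum_add_distrib]

lemma invPowConvolution_zero_left (f : ℕ → ℝ) (m : ℕ) :
    invPowConvolution 0 f m = ∑ n ∈ range m, f n := by
  simp [invPowConvolution]

lemma invPowConvolution_const_one (s m : ℕ) :
    invPowConvolution s (fun _ ↦ 1) m = ∑ n ∈ range m, ((n : ℝ) + 1)⁻¹ ^ s := by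
  rw [invPowConvolution, ← sum_range_reflect]
  refine sum_congr rfl fun n hn ↦ ?_
  rw [Nat.cast_sub (by grind), Nat.cast_sub (by grind)]
  grind

lemma invPowConvolution_partialFraction (s : ℕ) (f : ℕ → ℝ) (m : ℕ) :
    invPowConvolution (s + 1) (fun n ↦ ((n : ℝ) + 1)⁻¹ * f n) m =
      ((m : ℝ) + 1)⁻¹ * (invPowConvolution (s + 1) f m +
        invPowConvolution s (fun n ↦ ((n : ℝ) + 1)⁻¹ * f n) m) := by
  simp only [invPowConvolution, ← sum_add_distrib, mul_sum]
  refine sum_congr rfl fun n hn ↦ ?_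
  have hmn : (m : ℝ) - n ≠ 0 := sub_ne_zero.2 (by exact_mod_cast (mem_range.1 hn).ne')
  have hpf : ((m : ℝ) - n)⁻¹ * ((n : ℝ) + 1)⁻¹ =
      ((m : ℝ) + 1)⁻¹ * (((m : ℝ) - n)⁻¹ + ((n : ℝ) + 1)⁻¹) := by
    field_simp
    ring
  linear_combination ((m : ℝ) - n)⁻¹ ^ s * f n * hpf

lemma invPowConvolution_multipleHarmonicSum_cons_one (r : ℕ) (s : Fin d → ℕ) (m : ℕ) :
    invPowConvolution r (multipleHarmonicSum (1 ◂ s)) (m + 1) =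
      invPowConvolution r (multipleHarmonicSum (1 ◂ s)) m +
        invPowConvolution r (fun n ↦ ((n : ℝ) + 1)⁻¹ * multipleHarmonicSum s n) m := by
  rw [invPowConvolution_succ r (multipleHarmonicSum_zero _)]
  simp only [multipleHarmonicSum_cons_succ, pow_one, invPowConvolution_add]

lemma invPowConvolution_one_inv_mul_multipleHarmonicSum (s : Fin d → ℕ) (m : ℕ) :
    invPowConvolution 1 (fun n ↦ ((n : ℝ) + 1)⁻¹ * multipleHarmonicSum s n) m =
      ((m : ℝ) + 1)⁻¹ *
        (invPowConvolution 1 (multipleHarmonicSum s) m + multipleHarmonicSum (1 ◂ s) m) := by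
  rw [invPowConvolution_partialFraction, invPowConvolution_zero_left, multipleHarmonicSum_cons]
  simp

lemma cons_one_one : 1 ◂ (1 : Fin d → ℕ) = 1 := by
  ext i
  cases i using Fin.cases <;> rfl

lemma cons_one_mulSingle (j : Fin d) (a : ℕ) : 1 ◂ Pi.mulSingle j a = Pi.mulSingle j.succ a := by
  rw [Pi.mulSingle, Fin.cons_update, cons_one_one, Pi.mulSingle]

lemma cons_one_eq_mulSingle (a : ℕ) : a ◂ (1 : Fin d → ℕ) = Pi.mulSingle 0 a := by
  rw [← Fin.insertNth_zero', Fin.insertNth_one_right]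

theorem invPowConvolution_one_multipleHarmonicSum_ones (d m : ℕ) :
    invPowConvolution 1 (multipleHarmonicSum (1 : Fin d → ℕ)) m =
      (d + 1) * multipleHarmonicSum (1 : Fin (d + 1) → ℕ) m := by
  induction d generalizing m with
  | zero =>
    simp [funext (multipleHarmonicSum_of_isEmpty _), invPowConvolution_const_one,
      multipleHarmonicSum_depth_one]
  | succ d ihd =>
    induction m with
    | zero => simp [invPowConvolution]
    | succ m ihm =>
      rw [← cons_one_one (d := d), invPowConvolution_multipleHarmonicSum_cons_one, cons_one_one,
        invPowConvolution_one_inv_mul_multipleHarmonicSum, cons_one_one, ihm, ihd,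
        ← cons_one_one (d := d + 1), multipleHarmonicSum_cons_succ]
      push_cast
      ring

theorem invPowConvolution_two_multipleHarmonicSum_ones (d m : ℕ) :
    invPowConvolution 2 (multipleHarmonicSum (1 : Fin d → ℕ)) m =
      ∑ j : Fin (d + 1),
        ((d : ℝ) + 1 - j) * multipleHarmonicSum (Pi.mulSingle j 2 : Fin (d + 1) → ℕ) m := by
  induction d generalizing m with
  | zero =>
    simp [funext (multipleHarmonicSum_of_isEmpty _), invPowConvolution_const_one,
      multipleHarmonicSum_depth_one]
  | succ d ihd =>
    induction m with
    | zero => simp [invPowConvolution]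
    | succ m ihm =>
      rw [← cons_one_one (d := d), invPowConvolution_multipleHarmonicSum_cons_one,
        invPowConvolution_partialFraction, invPowConvolution_one_inv_mul_multipleHarmonicSum,
        cons_one_one, ihm, ihd, invPowConvolution_one_multipleHarmonicSum_ones]
      simp only [Fin.sum_univ_succ (n := d + 1), ← cons_one_eq_mulSingle, ← cons_one_mulSingle,
        multipleHarmonicSum_cons_succ, mul_add, sum_add_distrib, mul_sum]
      have hweight (j : Fin (d + 1)) (x y : ℝ) :
          (((d + 1 : ℕ) : ℝ) + 1 - (j.succ : ℕ)) * (x ^ 1 * y) = x * (((d : ℝ) + 1 - j) * y) := by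
        push_cast [Fin.val_succ]
        ring
      simp only [hweight]
      push_cast [Fin.val_zero]
      ring

lemma sum_range_mul_pow_mul_pow {R : Type*} [CommRing R] {x y z : R} (h : z * (y - x) = x * y)
    (p : ℕ) :
    ∑ j ∈ range p, (j : R) * (x ^ (p + 1 - j) * y ^ (j + 1)) =
      p * (y ^ (p + 1) * (z - x)) - (y ^ p - x ^ p) * z ^ 2 := by
  induction p with
  | zero => simp
  | succ p ih =>
    have hstep : ∑ j ∈ range p, (j : R) * (x ^ (p + 1 + 1 - j) * y ^ (j + 1)) =
        x * ∑ j ∈ range p, (j : R) * (x ^ (p + 1 - j) * y ^ (j + 1)) := by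
      rw [mul_sum]
      refine sum_congr rfl fun j hj ↦ ?_
      rw [Nat.succ_sub (by grind), pow_succ]
      ring
    rw [sum_range_succ, hstep, ih, show p + 1 + 1 - p = 2 by omega]
    push_cast
    linear_combination (-(p : R) * y ^ (p + 1) + y ^ p * z - y ^ (p + 1)) * h

lemma hasSum_sub_add_of_antitone {f : ℕ → ℝ} (hf : Antitone f) (hf₀ : Tendsto f atTop (𝓝 0))
    (n : ℕ) : HasSum (fun r ↦ f r - f (r + n)) (∑ k ∈ range n, f k) := by
  rw [hasSum_iff_tendsto_nat_of_nonneg fun r ↦ sub_nonneg.2 (hf (Nat.le_add_right r n))]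
  have hpartial (N : ℕ) : ∑ r ∈ range N, (f r - f (r + n)) =
      ∑ k ∈ range n, f k - ∑ k ∈ range n, f (N + k) := by
    have h₁ := sum_range_add f N n
    have h₂ := sum_range_add f n N
    rw [add_comm n N] at h₂
    simp only [sum_sub_distrib, add_comm _ n]
    linarith
  have htail : Tendsto (fun N ↦ ∑ k ∈ range n, f (N + k)) atTop (𝓝 0) := by
    simpa using tendsto_finsetSum (range n) fun k _ ↦ (tendsto_add_atTop_iff_nat k).2 hf₀
  simpa [hpartial] using htail.const_sub (∑ k ∈ range n, f k)

/-- Summing `c n * (f r - f (n + r + 1))` first over `r` telescopes, and first over the diagonals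
`n + r = m` gives the convolution. -/
theorem hasSum_antidiagonal_mul_sub {c f : ℕ → ℝ} (hc : 0 ≤ c) (hf : Antitone f)
    (hf₀ : Tendsto f atTop (𝓝 0)) {V : ℝ}
    (hV : HasSum (fun n ↦ c n * ∑ k ∈ range (n + 1), f k) V) :
    HasSum (fun m ↦ ∑ x ∈ antidiagonal m, c x.1 * (f x.2 - f (m + 1))) V := by
  let g (x : ℕ × ℕ) : ℝ := c x.1 * (f x.2 - f (x.2 + (x.1 + 1)))
  have hrow (n : ℕ) : HasSum (fun r ↦ g (n, r)) (c n * ∑ k ∈ range (n + 1), f k) :=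
    (hasSum_sub_add_of_antitone hf hf₀ (n + 1)).mul_left (c n)
  have hg : 0 ≤ g := fun x ↦ mul_nonneg (hc _) (sub_nonneg.2 (hf (Nat.le_add_right _ _)))
  have hsummable : Summable g := by
    refine (summable_prod_of_nonneg hg).2 ⟨fun n ↦ (hrow n).summable, ?_⟩
    simpa only [(hrow _).tsum_eq] using hV.summable
  have hsum : HasSum g V := by
    have h := hsummable.hasSum
    rwa [(h.prod_fiberwise hrow).unique hV] at h
  have hdiag := ((HasAntidiagonal.sigmaAntidiagonalEquivProd (A := ℕ)).hasSum_iff.2 hsum).sigma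
    fun m ↦ hasSum_fintype _
  refine hdiag.congr_fun fun m ↦ ?_
  change _ = ∑ x : antidiagonal m, g x
  rw [sum_coe_sort (antidiagonal m) g]
  refine sum_congr rfl fun x hx ↦ ?_
  rw [← mem_antidiagonal.1 hx, add_comm x.1, add_assoc]

lemma hasSum_sum_mul_inv_pow_sub {c : ℕ → ℝ} (hc : 0 ≤ c) {s : ℕ} (hs : s ≠ 0) {V : ℝ}
    (hV : HasSum (fun n ↦ c n * ∑ k ∈ range (n + 1), ((k : ℝ) + 1)⁻¹ ^ s) V) :
    HasSum (fun m : ℕ ↦ ∑ n ∈ range m, c n * (((m : ℝ) - n)⁻¹ ^ s - ((m : ℝ) + 1)⁻¹ ^ s)) V := by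
  have hanti : Antitone fun k : ℕ ↦ ((k : ℝ) + 1)⁻¹ ^ s := fun k l hkl ↦ by
    dsimp only
    gcongr
  have hlim : Tendsto (fun k : ℕ ↦ ((k : ℝ) + 1)⁻¹ ^ s) atTop (𝓝 0) := by
    simpa [hs] using (tendsto_one_div_add_atTop_nhds_zero_nat (𝕜 := ℝ)).pow s
  have h := hasSum_antidiagonal_mul_sub hc hanti hlim hV
  rw [← hasSum_nat_add_iff' 1]
  simp only [range_one, sum_singleton, range_zero, sum_empty, sub_zero]
  refine h.congr_fun fun m ↦ ?_
  rw [Nat.sum_antidiagonal_eq_sum_range_succ_mk]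
  refine sum_congr rfl fun n hn ↦ ?_
  have hsub : ((m - n : ℕ) : ℝ) + 1 = ((m + 1 : ℕ) : ℝ) - n := by
    rw [Nat.cast_sub (by grind)]
    push_cast
    ring
  dsimp only
  rw [hsub]

/-- The term `k = n` of the inner sum gives the first zeta value, the others the stuffle product. -/
lemma hasSum_mul_sum_inv_pow {c : ℕ} (hc : 2 ≤ c) {a : ℕ} (ha : 1 ≤ a) (s : Fin d → ℕ)
    (hs : ∀ i, 1 ≤ s i) :
    HasSum (fun n : ℕ ↦ ((n : ℝ) + 1)⁻¹ ^ c * multipleHarmonicSum s n *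
        ∑ k ∈ range (n + 1), ((k : ℝ) + 1)⁻¹ ^ a)
      (mzv ((c + a) ◂ s) +
        (∑ j : Fin (d + 1), mzv (c ◂ j.insertNth a s) +
          ∑ j : Fin d, mzv (c ◂ Function.update s j (s j + a)))) := by
  have hinsert (j : Fin (d + 1)) (i : Fin (d + 1)) : 1 ≤ j.insertNth (α := fun _ ↦ ℕ) a s i := by
    cases i using j.succAboveCases <;> simp [ha, hs]
  have hupdate (j i : Fin d) : 1 ≤ Function.update s j (s j + a) i := by
    rcases eq_or_ne i j with rfl | hij
    · simpa using (hs i).trans (Nat.le_add_right _ _)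
    · simpa [hij] using hs i
  refine ((hasSum_mzv_cons (hc.trans (Nat.le_add_right c a)) s hs).add
    ((hasSum_sum fun j _ ↦ hasSum_mzv_cons hc _ (hinsert j)).add
      (hasSum_sum fun j _ ↦ hasSum_mzv_cons hc _ (hupdate j)))).congr_fun fun n ↦ ?_
  have hstuffle := multipleHarmonicSum_stuffle a s n
  rw [multipleHarmonicSum_depth_one] at hstuffle
  rw [sum_range_succ, ← mul_sum, ← mul_sum]
  linear_combination ((n : ℝ) + 1)⁻¹ ^ c * hstuffle

lemma hasSum_mul_sum_inv_pow_ones {c : ℕ} (hc : 2 ≤ c) {a : ℕ} (ha : 1 ≤ a) (d : ℕ) :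
    HasSum (fun n : ℕ ↦ ((n : ℝ) + 1)⁻¹ ^ c * multipleHarmonicSum (1 : Fin d → ℕ) n *
        ∑ k ∈ range (n + 1), ((k : ℝ) + 1)⁻¹ ^ a)
      (mzv ((c + a) ◂ (1 : Fin d → ℕ)) +
        (∑ j : Fin (d + 1), mzv (c ◂ Pi.mulSingle j a) +
          ∑ j : Fin d, mzv (c ◂ Pi.mulSingle j (a + 1)))) := by
  have h := hasSum_mul_sum_inv_pow hc ha (1 : Fin d → ℕ) fun _ ↦ le_rfl
  simp only [Fin.insertNth_one_right, Pi.one_apply, add_comm 1 a] at h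
  exact h

lemma hasSum_inv_pow_mul_invPowConvolution_two {c : ℕ} (hc : 2 ≤ c) (d : ℕ) :
    HasSum (fun m : ℕ ↦ ((m : ℝ) + 1)⁻¹ ^ c *
        invPowConvolution 2 (multipleHarmonicSum (1 : Fin d → ℕ)) m)
      (∑ j : Fin (d + 1), ((d : ℝ) + 1 - j) * mzv (c ◂ Pi.mulSingle j 2)) := by
  have hword (j i : Fin (d + 1)) : 1 ≤ (Pi.mulSingle j 2 : Fin (d + 1) → ℕ) i := by
    rcases eq_or_ne i j with rfl | hij <;> simp [*]
  refine (hasSum_sum fun j _ ↦ (hasSum_mzv_cons hc _ (hword j)).mul_left _).congr_fun fun m ↦ ?_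
  simp only [invPowConvolution_two_multipleHarmonicSum_ones, mul_sum, mul_left_comm]

/-- `sum_range_mul_pow_mul_pow` at `x = 1 / (m + 1)`, `y = 1 / (n + 1)`, `z = 1 / (m - n)`,
multiplied by `H_n(s)` and summed over `n < m`. -/
lemma sum_range_mul_inv_pow_mul_multipleHarmonicSum_cons (p : ℕ) (s : Fin d → ℕ) (m : ℕ) :
    ∑ j ∈ range p, (j : ℝ) * (((m : ℝ) + 1)⁻¹ ^ (p + 1 - j) *
        multipleHarmonicSum ((j + 1) ◂ s) m) =
      p * ∑ n ∈ range m, ((n : ℝ) + 1)⁻¹ ^ (p + 1) * multipleHarmonicSum s n *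
          (((m : ℝ) - n)⁻¹ ^ 1 - ((m : ℝ) + 1)⁻¹ ^ 1) -
        ∑ n ∈ range m, ((n : ℝ) + 1)⁻¹ ^ p * multipleHarmonicSum s n *
          (((m : ℝ) - n)⁻¹ ^ 2 - ((m : ℝ) + 1)⁻¹ ^ 2) -
        ((m : ℝ) + 1)⁻¹ ^ 2 * multipleHarmonicSum (p ◂ s) m +
        ((m : ℝ) + 1)⁻¹ ^ p * invPowConvolution 2 (multipleHarmonicSum s) m := by
  simp only [multipleHarmonicSum_cons, invPowConvolution, mul_sum]
  rw [sum_comm, ← sum_sub_distrib, ← sum_sub_distrib, ← sum_add_distrib]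
  refine sum_congr rfl fun n hn ↦ ?_
  have hmn : (m : ℝ) - n ≠ 0 := sub_ne_zero.2 (by exact_mod_cast (mem_range.1 hn).ne')
  have hxyz : ((m : ℝ) - n)⁻¹ * (((n : ℝ) + 1)⁻¹ - ((m : ℝ) + 1)⁻¹) =
      ((m : ℝ) + 1)⁻¹ * ((n : ℝ) + 1)⁻¹ := by
    field_simp
    ring
  have hsum := congrArg (· * multipleHarmonicSum s n) (sum_range_mul_pow_mul_pow hxyz p)
  simp only [sum_mul, mul_assoc] at hsum
  rw [hsum]
  ring

theorem sum_range_mul_mzv_cons_cons_ones {p : ℕ} (hp : 2 ≤ p) (d : ℕ) :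
    ∑ j ∈ range p, (j : ℝ) * mzv ((p + 1 - j) ◂ (j + 1) ◂ (1 : Fin d → ℕ)) =
      ((p : ℝ) - 1) * mzv ((p + 2) ◂ (1 : Fin d → ℕ)) - mzv (2 ◂ p ◂ (1 : Fin d → ℕ)) +
        (p : ℝ) * ((d : ℝ) + 1) * mzv ((p + 1) ◂ (1 : Fin (d + 1) → ℕ)) +
        ∑ j : Fin d,
          ((p : ℝ) * mzv ((p + 1) ◂ Pi.mulSingle j 2) - mzv (p ◂ Pi.mulSingle j 3) +
            ((d : ℝ) - j) * mzv (p ◂ Pi.mulSingle j.castSucc 2)) := by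
  have hcons (a : ℕ) (ha : 1 ≤ a) (i : Fin (d + 1)) : 1 ≤ (a ◂ (1 : Fin d → ℕ)) i := by
    cases i using Fin.cases <;> simp [ha]
  have hnonneg (c n : ℕ) : 0 ≤ ((n : ℝ) + 1)⁻¹ ^ c * multipleHarmonicSum (1 : Fin d → ℕ) n :=
    mul_nonneg (by positivity) (multipleHarmonicSum_nonneg _ n)
  have hleft := hasSum_sum fun j (hj : j ∈ range p) ↦
    (hasSum_mzv_cons (show 2 ≤ p + 1 - j by grind) _ (hcons (j + 1) (by omega))).mul_left (j : ℝ)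
  have hfirst := hasSum_sum_mul_inv_pow_sub (hnonneg (p + 1)) one_ne_zero
    (hasSum_mul_sum_inv_pow_ones (by omega) le_rfl d)
  have hsecond := hasSum_sum_mul_inv_pow_sub (hnonneg p) two_ne_zero
    (hasSum_mul_sum_inv_pow_ones hp one_le_two d)
  have hthird := hasSum_mzv_cons le_rfl _ (hcons p (by omega))
  have hconv := hasSum_inv_pow_mul_invPowConvolution_two hp d
  have hright := (((hfirst.mul_left (p : ℝ)).sub hsecond).sub hthird).add hconv
  rw [hleft.unique (hright.congr_fun fun m ↦
    sum_range_mul_inv_pow_mul_multipleHarmonicSum_cons p 1 m)]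
  simp only [Pi.mulSingle_one, sum_const, card_univ, Fintype.card_fin, nsmul_eq_mul,
    Fin.sum_univ_castSucc (n := d), Fin.val_castSucc, Fin.val_last, sum_add_distrib,
    sum_sub_distrib, sub_mul, add_mul, ← mul_sum, add_assoc p, Nat.reduceAdd]
  ring

lemma ite_eq_cons_one (a : ℕ) :
    (fun n : Fin (d + 1) ↦ if (n : ℕ) = 0 then a else 1) = a ◂ (1 : Fin d → ℕ) := by
  ext n
  cases n using Fin.cases <;> simp

lemma ite_eq_cons_cons_one (a b : ℕ) :
    (fun n : Fin (d + 2) ↦ if (n : ℕ) = 0 then a else if (n : ℕ) = 1 then b else 1) =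
      a ◂ b ◂ (1 : Fin d → ℕ) := by
  ext n
  cases n using Fin.cases with
  | zero => simp
  | succ n => simp [← ite_eq_cons_one]

lemma ite_eq_cons_mulSingle (a b : ℕ) (j : Fin d) :
    (fun n : Fin (d + 1) ↦ if (n : ℕ) = 0 then a else if (n : ℕ) = j + 1 then b else 1) =
      a ◂ Pi.mulSingle j b := by
  ext n
  cases n using Fin.cases <;> simp [Pi.mulSingle_apply, Fin.ext_iff]

lemma sum_Icc_sub_eq_sum_range {M : Type*} [AddCommMonoid M] (f : ℕ → ℕ → M) (p : ℕ) :
    ∑ a ∈ Icc 2 (p + 1), f a (p + 2 - a) = ∑ j ∈ range p, f (p + 1 - j) (j + 1) := by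
  refine sum_nbij' (p + 1 - ·) (p + 1 - ·) ?_ ?_ ?_ ?_ ?_ <;> grind

lemma sum_Icc_sub_one_mul_mzv (p d : ℕ) :
    ∑ a ∈ Icc 2 (p + 1), (((p + 2 - a : ℕ) : ℝ) - 1) *
        mzv (a ◂ (p + 2 - a) ◂ (1 : Fin d → ℕ)) =
      ∑ j ∈ range p, (j : ℝ) * mzv ((p + 1 - j) ◂ (j + 1) ◂ (1 : Fin d → ℕ)) := by
  simpa using sum_Icc_sub_eq_sum_range
    (fun a b ↦ ((b : ℝ) - 1) * mzv (a ◂ b ◂ (1 : Fin d → ℕ))) p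

end

theorem weighted_sum_ab_ones_b (u d : ℕ) (hu : 4 ≤ u)
    (q p : ℕ) (hq : q = u - 1) (hp : p = u - 2) :
    -- Σ_{a+b=u, a≥2, b≥1} (b−1)·ζ(a,b,1_d)
    (∑ a ∈ Finset.Icc 2 (u - 1), (((u - a : ℕ) : ℝ) - 1) *
        mzv (fun n : Fin (d + 2) =>
          if (n : ℕ) = 0 then a else if (n : ℕ) = 1 then u - a else 1))
    =
    ((p : ℝ) - 1) * mzv (fun n : Fin (d + 1) => if (n : ℕ) = 0 then u else 1)
    - mzv (fun n : Fin (d + 2) => if (n : ℕ) = 0 then 2 else if (n : ℕ) = 1 then p else 1)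
    + (p : ℝ) * ((d : ℝ) + 1) * mzv (fun n : Fin (d + 2) => if (n : ℕ) = 0 then q else 1)
    + ∑ j ∈ Finset.range d,
        ((p : ℝ) * mzv (fun n : Fin (d + 1) =>
            if (n : ℕ) = 0 then q else if (n : ℕ) = j + 1 then 2 else 1)
         - mzv (fun n : Fin (d + 1) =>
            if (n : ℕ) = 0 then p else if (n : ℕ) = j + 1 then 3 else 1)
         + ((d - j : ℕ) : ℝ) *
            mzv (fun n : Fin (d + 2) =>
              if (n : ℕ) = 0 then p else if (n : ℕ) = j + 1 then 2 else 1)) := by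
  obtain rfl : u = p + 2 := by omega
  obtain rfl : q = p + 1 := by omega
  have hweight (j : Fin d) : ((d - j : ℕ) : ℝ) = d - j := Nat.cast_sub j.isLt.le
  have hword (j : Fin d) := ite_eq_cons_mulSingle p 2 j.castSucc
  simp only [Fin.val_castSucc] at hword
  simp only [Finset.sum_range (n := d), ite_eq_cons_one, ite_eq_cons_cons_one,
    ite_eq_cons_mulSingle, hword, hweight]
  exact (sum_Icc_sub_one_mul_mzv p d).trans (sum_range_mul_mzv_cons_cons_ones (by omega) d)
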